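/- Let H be an invertible 2×2 real matrix, g ∈ ℝ² with gᵀ(HᵀH)⁻¹g > 1, let q ∈ ℝ² be a unit vector satisfying ‖H q‖ > |gᵀ q|, and let q⊥ ∈ ℝ² be a unit vector with qᵀ q⊥ = 0. Assume gᵀ(HᵀH)⁻¹q⊥ ≠ 0, and define α* by 1/α* = gᵀ(HᵀH)⁻¹q⊥ / (1 − gᵀ(HᵀH)⁻¹g) and a* = H^{-T}(α* q⊥ + g). Then ‖a*‖ < 1. -/

import Mathlib

open Matrix

/-!
Put `u = H⁻ᵀ g`, `v = H⁻ᵀ q⊥` and `w = H q`. Then `gᵀ(HᵀH)⁻¹g = ‖u‖²`, `gᵀ(HᵀH)⁻¹q⊥ = u ⬝ v`,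
`w ⬝ v = qᵀq⊥ = 0` and `w ⬝ u = gᵀq`, so `a* = α* v + u` with `α* (u ⬝ v) = 1 - ‖u‖²`.
Expanding, `‖a*‖² < 1` amounts to `α*² ‖v‖² < ‖u‖² - 1`, that is,
`(‖u‖² - 1) ‖v‖² < (u ⬝ v)²`. Three vectors in the plane have zero Gram determinant (`gram_zero`);
since `v ⟂ w`, this reads `(u ⬝ v)² ‖w‖² = ‖v‖² (‖u‖² ‖w‖² - (u ⬝ w)²)`, and the inequality
follows from `(u ⬝ w)² < ‖w‖²`.
-/

/-- The Gram determinant of three vectors in the plane vanishes. -/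
lemma gram_zero (u v w : Fin 2 → ℝ) :
    (u ⬝ᵥ u) * (v ⬝ᵥ v) * (w ⬝ᵥ w) + 2 * (u ⬝ᵥ v) * (w ⬝ᵥ v) * (w ⬝ᵥ u)
      - (u ⬝ᵥ u) * (w ⬝ᵥ v) ^ 2 - (v ⬝ᵥ v) * (w ⬝ᵥ u) ^ 2 - (w ⬝ᵥ w) * (u ⬝ᵥ v) ^ 2 = 0 := by
  simp only [dotProduct, Fin.sum_univ_two]
  ring

lemma dot_gram_inv (H : Matrix (Fin 2) (Fin 2) ℝ) (x y : Fin 2 → ℝ) :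
    x ⬝ᵥ (Hᵀ * H)⁻¹.mulVec y = (Hᵀ)⁻¹.mulVec x ⬝ᵥ (Hᵀ)⁻¹.mulVec y := by
  rw [Matrix.mul_inv_rev, ← mulVec_mulVec, dotProduct_mulVec, ← mulVec_transpose,
    transpose_nonsing_inv]

lemma mulVec_dot_inv_transpose (H : Matrix (Fin 2) (Fin 2) ℝ) (hH : IsUnit H.det)
    (x y : Fin 2 → ℝ) : H.mulVec x ⬝ᵥ (Hᵀ)⁻¹.mulVec y = x ⬝ᵥ y := by
  have hT : IsUnit (Hᵀ).det := by rwa [det_transpose]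
  rw [← vecMul_transpose, ← dotProduct_mulVec, mulVec_mulVec, mul_nonsing_inv _ hT, one_mulVec]

/-- The scalar form of the claim, in terms of `u`, `v`, `w`. -/
lemma norm_sq_lt_one (u v w : Fin 2 → ℝ) (a : ℝ) (hu : 1 < u ⬝ᵥ u) (hwv : w ⬝ᵥ v = 0)
    (hwu : (w ⬝ᵥ u) ^ 2 < w ⬝ᵥ w) (huv : u ⬝ᵥ v ≠ 0) (ha : a * (u ⬝ᵥ v) = 1 - u ⬝ᵥ u) :
    (a • v + u) ⬝ᵥ (a • v + u) < 1 := by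
  have hgram := gram_zero u v w
  have hexp : (a • v + u) ⬝ᵥ (a • v + u)
      = a ^ 2 * (v ⬝ᵥ v) + 2 * (a * (u ⬝ᵥ v)) + u ⬝ᵥ u := by
    simp only [dotProduct, Fin.sum_univ_two, Pi.add_apply, Pi.smul_apply, smul_eq_mul]
    ring
  have hv : 0 < v ⬝ᵥ v := by
    have h0 : v ≠ 0 := by
      rintro rfl
      simp at huv
    exact lt_of_le_of_ne (by simpa using dotProduct_star_self_nonneg v)
      (fun h => h0 (dotProduct_self_eq_zero.mp h.symm))
  rw [hexp, ha]
  rw [hwv] at hgram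
  generalize u ⬝ᵥ u = U at *
  generalize v ⬝ᵥ v = V at *
  generalize w ⬝ᵥ w = W at *
  generalize w ⬝ᵥ u = r at *
  generalize u ⬝ᵥ v = s at *
  have hW : 0 < W := lt_of_le_of_lt (sq_nonneg r) hwu
  have hkey : (U - 1) * V < s ^ 2 := by
    have : W * ((U - 1) * V) < W * s ^ 2 := by
      nlinarith [mul_pos hv (sub_pos.mpr hwu)]
    exact lt_of_mul_lt_mul_left this hW.le
  have hs : 0 < s ^ 2 := by positivity
  have hsq : a ^ 2 * s ^ 2 = (U - 1) ^ 2 := by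
    rw [← mul_pow, ha]
    ring
  have h : s ^ 2 * (a ^ 2 * V) < s ^ 2 * (U - 1) := by
    calc s ^ 2 * (a ^ 2 * V) = (U - 1) * ((U - 1) * V) := by linear_combination V * hsq
      _ < (U - 1) * s ^ 2 := mul_lt_mul_of_pos_left hkey (by linarith)
      _ = s ^ 2 * (U - 1) := mul_comm _ _
  linarith [lt_of_mul_lt_mul_left h hs.le]

/-- Let `H` be invertible 2×2, `g` with `gᵀ(HᵀH)⁻¹g > 1`, `q` a unit vector with
`‖H q‖ > |gᵀ q|`, and `q⊥` a unit vector orthogonal to `q` with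
`gᵀ(HᵀH)⁻¹q⊥ ≠ 0`. Define `α*` by `1/α* = gᵀ(HᵀH)⁻¹q⊥ / (1 − gᵀ(HᵀH)⁻¹g)` and
`a* = H^{-T}(α* q⊥ + g)`. Then `‖a*‖ < 1`. -/
theorem stmt8 (H : Matrix (Fin 2) (Fin 2) ℝ) (g q qp : Fin 2 → ℝ) (alphas : ℝ)
    (hH : IsUnit H.det) (hg : 1 < g ⬝ᵥ (Hᵀ * H)⁻¹.mulVec g)
    (hq : q ⬝ᵥ q = 1)
    (hHq : |g ⬝ᵥ q| < Real.sqrt (H.mulVec q ⬝ᵥ H.mulVec q))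
    (hqp : qp ⬝ᵥ qp = 1) (horth : q ⬝ᵥ qp = 0)
    (hgqp : g ⬝ᵥ (Hᵀ * H)⁻¹.mulVec qp ≠ 0)
    (halphas : 1 / alphas =
      (g ⬝ᵥ (Hᵀ * H)⁻¹.mulVec qp) / (1 - g ⬝ᵥ (Hᵀ * H)⁻¹.mulVec g)) :
    Real.sqrt ((Hᵀ)⁻¹.mulVec (alphas • qp + g) ⬝ᵥ (Hᵀ)⁻¹.mulVec (alphas • qp + g))
      < 1 := by
  rw [dot_gram_inv] at hg hgqp
  rw [dot_gram_inv, dot_gram_inv] at halphas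
  have hden : 1 - (Hᵀ)⁻¹.mulVec g ⬝ᵥ (Hᵀ)⁻¹.mulVec g ≠ 0 := by linarith
  -- `α* = 0` would make `1 / α*` zero, whereas the right-hand side is nonzero.
  have ha0 : alphas ≠ 0 := by
    rintro rfl
    rw [div_zero] at halphas
    exact div_ne_zero hgqp hden halphas.symm
  rw [div_eq_div_iff ha0 hden, one_mul] at halphas
  have hwu : (H.mulVec q ⬝ᵥ (Hᵀ)⁻¹.mulVec g) ^ 2 < H.mulVec q ⬝ᵥ H.mulVec q := by
    rw [mulVec_dot_inv_transpose H hH, dotProduct_comm q g, ← sq_abs]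
    exact (Real.lt_sqrt (abs_nonneg _)).mp hHq
  rw [mulVec_add, mulVec_smul, Real.sqrt_lt' one_pos, one_pow]
  exact norm_sq_lt_one _ _ (H.mulVec q) alphas hg
    ((mulVec_dot_inv_transpose H hH q qp).trans horth) hwu hgqp (by linarith)
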